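/- Let L = ⋃_{n<ω} L_n be an infinite alphabet given as the union of an increasing chain (L_n)_{n<ω} of finite subsets. For every finite colouring of W_L there exist a variable-free word w_0 ∈ W_L and an infinite sequence X = (x_n)_{n<ω} of left-variable words such that the translate w_0⌢[X]_L^* = {w_0⌢x_0[λ_0]⌢x_1[λ_1]⌢…⌢x_k[λ_k] : k < ω, λ_i ∈ L_i for each i ≤ k} is monochromatic. -/

import Mathlib

namespace DualRamsey

/-- Variable words over alphabet `L` are words over `Option L`, where `none` plays the
role of the variable `v`. `substW x lam` is `x[λ]`: replace every occurrence of the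
variable by `lam`. -/
def substW {L : Type*} (x : List (Option L)) (lam : L) : List L :=
  x.map (fun o => o.getD lam)

/-- A left-variable word: a variable word whose first letter is the variable. -/
def IsLeftVar {L : Type*} (x : List (Option L)) : Prop := x.head? = some none

attribute [local instance] Ultrafilter.mul Ultrafilter.semigroup

open Filter in
theorem ultra_map_mul {M N : Type*} [Mul M] [Mul N] (f : M → N)
    (hf : ∀ a b, f (a * b) = f a * f b) (U V : Ultrafilter M) :
    (U * V).map f = U.map f * V.map f := by
  apply Ultrafilter.coe_inj.mp
  apply Filter.ext'
  intro p
  rw [Ultrafilter.eventually_mul]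
  simp only [Ultrafilter.coe_map, Filter.eventually_map]
  rw [Ultrafilter.eventually_mul]
  simp only [hf]

/-- Existence of an element generating a minimal left ideal. -/
theorem exists_min_left {S : Type*} [Semigroup S] [TopologicalSpace S] [CompactSpace S]
    [T2Space S] [Nonempty S] (hc : ∀ r : S, Continuous (· * r)) :
    ∃ w : S, ∀ a b : S, ∃ z, z * (b * w) = a * w := by
  let P : Set (Set S) := {I | IsClosed I ∧ I.Nonempty ∧ ∀ a, ∀ x ∈ I, a * x ∈ I}
  obtain ⟨I, hI⟩ : ∃ I, Minimal (· ∈ P) I := by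
    refine zorn_superset P ?_
    intro C hCP hC
    rcases C.eq_empty_or_nonempty with rfl | hne
    · exact ⟨Set.univ, ⟨isClosed_univ, Set.univ_nonempty, by simp⟩, by simp⟩
    · refine ⟨⋂₀ C, ⟨isClosed_sInter fun t ht => (hCP ht).1, ?_, ?_⟩,
        fun s hs => Set.sInter_subset_of_mem hs⟩
      · have : Nonempty C := hne.to_subtype
        refine IsCompact.nonempty_sInter_of_directed_nonempty_isCompact_isClosed
          ?_ ?_ ?_ ?_
        · exact fun a ha b hb => (hC.total ha hb).elim (fun h => ⟨a, ha, subset_rfl, h⟩)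
            (fun h => ⟨b, hb, h, subset_rfl⟩)
        · exact fun t ht => (hCP ht).2.1
        · exact fun t ht => (hCP ht).1.isCompact
        · exact fun t ht => (hCP ht).1
      · intro a x hx t ht
        exact (hCP ht).2.2 a x (hx t ht)
  obtain ⟨hcl, ⟨w, hw⟩, hid⟩ := hI.prop
  refine ⟨w, fun a b => ?_⟩
  have hbw := hid b w hw
  have hJ : Set.range (· * (b * w)) ∈ P := by
    refine ⟨(isCompact_range (hc _)).isClosed, Set.range_nonempty _, ?_⟩
    rintro a _ ⟨x, rfl⟩
    exact ⟨a * x, by simp [mul_assoc]⟩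
  have hsub : Set.range (· * (b * w)) ⊆ I := by
    rintro _ ⟨x, rfl⟩
    exact hid x _ hbw
  exact hI.le_of_le hJ hsub (hid a w hw)

/-- `substW` as a map between free monoids. -/
def substM {L : Type*} (l : L) (x : FreeMonoid (Option L)) : FreeMonoid L := substW x l

/-- `IsLeftVar` as a predicate on the free monoid. -/
def LeftVarM {L : Type*} (x : FreeMonoid (Option L)) : Prop := IsLeftVar (L := L) x

theorem substM_mul {L : Type*} (l : L) (x y : FreeMonoid (Option L)) :
    substM l (x * y) = substM l x * substM l y :=
  List.map_append

theorem leftVar_append {L : Type*} {x : List (Option L)} (hx : IsLeftVar x)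
    (y : List (Option L)) : IsLeftVar (x ++ y) := by
  unfold IsLeftVar at *
  cases x with
  | nil => simp at hx
  | cons a t => simpa using hx

/-- A left-variable ultrafilter all of whose substitutions absorb each other on the right. -/
theorem exists_ultra (L : Type*) : ∃ u : Ultrafilter (FreeMonoid (Option L)),
    (∀ᶠ x : FreeMonoid (Option L) in u, LeftVarM x) ∧
    ∀ l l' : L, u.map (substM l) * u.map (substM l') = u.map (substM l) := by
  obtain ⟨w, hw⟩ := exists_min_left (S := Ultrafilter (FreeMonoid L))
    Ultrafilter.continuous_mul_left
  let w' : Ultrafilter (FreeMonoid (Option L)) := w.map (FreeMonoid.map some)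
  have hw' : ∀ l, w'.map (substM l) = w := by
    intro l
    have : substM l ∘ FreeMonoid.map some = (id : FreeMonoid L → FreeMonoid L) := by
      funext x
      exact (List.map_map (l := x)).trans (List.map_id _)
    simp only [w', Ultrafilter.map_map, this, Ultrafilter.map_id]
  let V : Set (Ultrafilter (FreeMonoid (Option L))) := {p | {x | LeftVarM x} ∈ p}
  have hmul : ∀ p ∈ V, ∀ q, p * q ∈ V := by
    intro p hp q
    change ∀ᶠ x : FreeMonoid (Option L) in ↑(p * q), LeftVarM x
    rw [Ultrafilter.eventually_mul]
    filter_upwards [hp] with x hx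
    refine Filter.Eventually.of_forall fun y => ?_
    exact leftVar_append hx y
  have hVc : IsCompact V := (ultrafilter_isClosed_basic _).isCompact
  obtain ⟨u, ⟨p, hp, hpu⟩, huu⟩ := exists_idempotent_in_compact_subsemigroup
    (Ultrafilter.continuous_mul_left) ((· * w') '' V)
    (Set.Nonempty.image _ ⟨pure (FreeMonoid.of none), show _ = _ from rfl⟩)
    (hVc.image (Ultrafilter.continuous_mul_left w'))
    (by
      rintro _ ⟨a, ha, rfl⟩ _ ⟨b, hb, rfl⟩
      exact ⟨a * (w' * b), hmul _ ha _, by simp [mul_assoc]⟩)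
  refine ⟨u, ?_, ?_⟩
  · rw [← hpu]; exact hmul p hp w'
  · intro l l'
    have key : ∀ l, u.map (substM l) = p.map (substM l) * w := by
      intro l
      rw [← hpu]
      simp only
      rw [ultra_map_mul _ (substM_mul l), hw']
    have hid : u.map (substM l') * u.map (substM l') = u.map (substM l') := by
      rw [← ultra_map_mul _ (substM_mul l'), huu]
    obtain ⟨z, hz⟩ := hw (p.map (substM l)) (p.map (substM l'))
    rw [← key, ← key] at hz
    rw [← hz, mul_assoc, hid]

/-- **Left-variable Hales–Jewett theorem for infinite alphabets.**
Let `L = ⋃ₙ Lₙ` be an infinite alphabet given as the union of an increasing chain of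
finite subsets. For every finite colouring of `W_L` there are a variable-free word `w₀`
and an infinite sequence `X = (xₙ)` of left-variable words such that the translate
`w₀⌢[X]_L^* = {w₀⌢x₀[λ₀]⌢x₁[λ₁]⌢…⌢x_k[λ_k] : k < ω, λᵢ ∈ Lᵢ for i ≤ k}`
is monochromatic. -/
theorem leftVariableHalesJewettInfinite (L : Type) [Infinite L]
    (Ln : ℕ → Set L) (hmono : Monotone Ln) (hfin : ∀ n, (Ln n).Finite)
    (hcov : ⋃ n, Ln n = Set.univ)
    (m : ℕ) (c : List L → Fin m) :
    ∃ (w₀ : List L) (X : ℕ → List (Option L)) (i : Fin m),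
      (∀ n, IsLeftVar (X n)) ∧
      ∀ (k : ℕ) (lam : Fin (k + 1) → L), (∀ j : Fin (k + 1), lam j ∈ Ln j) →
        c (w₀ ++ (List.ofFn fun j : Fin (k + 1) => substW (X j) (lam j)).flatten) = i := by
  classical
  obtain ⟨u, huL, hu⟩ := exists_ultra L
  let e : L → Ultrafilter (FreeMonoid L) := fun l => u.map (substM l)
  have he : ∀ l l', e l * e l' = e l := hu
  obtain ⟨l0⟩ : Nonempty L := inferInstance
  let cM : FreeMonoid L → Fin m := c
  have hev : ∀ (i : Fin m) (a : FreeMonoid L) (l l' : L), (∀ᶠ y in e l, cM (a * y) = i) →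
      ∀ᶠ y in e l, ∀ᶠ z in e l', cM (a * y * z) = i := by
    intro i a l l' h
    rw [← he l l', Ultrafilter.eventually_mul] at h
    simpa only [mul_assoc] using h
  obtain ⟨i, hi⟩ : ∃ i, ∀ᶠ y in e l0, cM y = i := by
    have : ∀ᶠ y in e l0, ∃ i, cM y = i := Filter.Eventually.of_forall fun y => ⟨_, rfl⟩
    exact Ultrafilter.eventually_exists_iff.mp this
  let Good : ℕ → FreeMonoid L → Prop := fun k a =>
    cM a = i ∧ ∀ l ∈ Ln k, ∀ᶠ y in e l, cM (a * y) = i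
  obtain ⟨w₀, hw₀⟩ : ∃ w, Good 0 w := by
    have h2 : ∀ᶠ y in e l0, ∀ l ∈ Ln 0, ∀ᶠ z in e l, cM (y * z) = i := by
      rw [Filter.eventually_all_finite (hfin 0)]
      intro l _
      simpa using hev i 1 l0 l (by simpa using hi)
    exact (hi.and h2).exists
  have step : ∀ (k : ℕ) (F : Set (FreeMonoid L)), ∃ x : FreeMonoid (Option L),
      LeftVarM x ∧ (F.Finite → (∀ a ∈ F, Good k a) →
        ∀ a ∈ F, ∀ l ∈ Ln k, Good (k + 1) (a * substM l x)) := by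
    intro k F
    by_cases hF : F.Finite ∧ ∀ a ∈ F, Good k a
    · obtain ⟨hF, hG⟩ := hF
      have : ∀ᶠ x in u, ∀ a ∈ F, ∀ l ∈ Ln k, Good (k + 1) (a * substM l x) := by
        rw [Filter.eventually_all_finite hF]
        intro a ha
        rw [Filter.eventually_all_finite (hfin k)]
        intro l hl
        have h1 := (hG a ha).2 l hl
        have h2 : ∀ᶠ y in e l, Good (k + 1) (a * y) := by
          refine h1.and ?_
          rw [Filter.eventually_all_finite (hfin (k + 1))]
          intro l' _
          exact hev i a l l' h1
        exact h2
      obtain ⟨x, hx, hx'⟩ := (huL.and this).exists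
      exact ⟨x, hx, fun _ _ => hx'⟩
    · obtain ⟨x, hx⟩ := huL.exists
      exact ⟨x, hx, fun h h' => (hF ⟨h, h'⟩).elim⟩
  choose xs hxs hstep using step
  let F : ℕ → Set (FreeMonoid L) := fun k => Nat.rec {w₀}
    (fun k F => Set.image2 (fun a l => a * substM l (xs k F)) F (Ln k)) k
  have hF : ∀ k, (F k).Finite ∧ ∀ a ∈ F k, Good k a := by
    intro k
    induction k with
    | zero => exact ⟨Set.finite_singleton _, fun a ha => (show a = w₀ from ha) ▸ hw₀⟩
    | succ k ih =>
      refine ⟨ih.1.image2 _ (hfin k), ?_⟩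
      rintro _ ⟨a, ha, l, hl, rfl⟩
      exact hstep k (F k) ih.1 ih.2 a ha l hl
  have hmem : ∀ (k : ℕ) (lam : Fin k → L), (∀ j : Fin k, lam j ∈ Ln j) →
      ∃ a ∈ F k, FreeMonoid.toList w₀ ++
        (List.ofFn fun j : Fin k => substW (xs j (F j)) (lam j)).flatten
          = FreeMonoid.toList a := by
    intro k
    induction k with
    | zero =>
      intro lam _
      exact ⟨w₀, Set.mem_singleton _, by simp⟩
    | succ k ih =>
      intro lam hlam
      obtain ⟨a, ha, h⟩ := ih (fun j => lam j.castSucc) (fun j => hlam j.castSucc)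
      refine ⟨_, ⟨_, ha, lam (Fin.last k), hlam (Fin.last k), rfl⟩, ?_⟩
      rw [List.ofFn_succ', List.concat_eq_append, List.flatten_append, ← List.append_assoc]
      simp only [List.flatten_cons, List.flatten_nil, List.append_nil]
      exact congrArg (· ++ substW (xs k (F k)) (lam (Fin.last k))) h
  refine ⟨w₀, fun k => xs k (F k), i, fun n => hxs n _, ?_⟩
  intro k lam hlam
  obtain ⟨a, ha, h⟩ := hmem (k + 1) lam hlam
  exact (congrArg c h).trans ((hF (k + 1)).2 a ha).1

end DualRamsey
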